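/- Let f ∈ H_a^∞, let π/2 < θ < π and ε ≥ 0, and for λ ∉ Γ_{θ,ε} define f̃(λ) = (1/(2πi)) ∫_{Γ_{θ,ε}} f(z)/(z−λ) dz. Then f̃ is holomorphic on ℂ \ Γ_{θ,ε}, and f̃(λ) = f(λ) for every λ ∈ Γ_{θ,ε}^−, while f̃(λ) = 0 for every λ ∈ Γ_{θ,ε}^+. -/

import Mathlib

open Filter Topology MeasureTheory Set

noncomputable section

/-- Parametrization of the contour `Γ_{θ,ε}`: for `ε = 0` two rays
`t ↦ |t| e^{∓iθ}`, and for `ε > 0` the two rays `{ρ e^{±iθ} : ρ ≥ ε}` joined by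
the arc of the circle of radius `ε` through `-ε`, run from argument `-θ` to `θ`. -/
def gammaCurve (θ ε t : ℝ) : ℂ :=
  if t ≤ -ε then (-t : ℂ) * Complex.exp (-(θ : ℂ) * Complex.I)
  else if t < ε then
    (ε : ℂ) * Complex.exp (Complex.I * ((-(t * (Real.pi - θ) / ε) - Real.pi : ℝ) : ℂ))
  else (t : ℂ) * Complex.exp ((θ : ℂ) * Complex.I)

/-- The (piecewise) derivative of the parametrization `t ↦ gammaCurve θ ε t`. -/
def gammaDeriv (θ ε t : ℝ) : ℂ :=
  if t ≤ -ε then -Complex.exp (-(θ : ℂ) * Complex.I)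
  else if t < ε then
    -Complex.I * ((Real.pi - θ : ℝ) : ℂ) *
      Complex.exp (Complex.I * ((-(t * (Real.pi - θ) / ε) - Real.pi : ℝ) : ℂ))
  else Complex.exp ((θ : ℂ) * Complex.I)

/-- The open region to the right of the contour `Γ_{θ,ε}`. -/
def gammaPlus (θ ε : ℝ) : Set ℂ :=
  {w : ℂ | ∃ (t x : ℝ), 0 < x ∧ w = gammaCurve θ ε t + (x : ℂ)}

/-- The open region to the left of the contour `Γ_{θ,ε}`. -/
def gammaMinus (θ ε : ℝ) : Set ℂ :=
  {w : ℂ | ∃ (t x : ℝ), x < 0 ∧ w = gammaCurve θ ε t + (x : ℂ)}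

/-- The class `H_a^∞` of admissible holomorphic functions on the left half-plane. -/
structure MemHaInf (f : ℂ → ℂ) : Prop where
  holo : DifferentiableOn ℂ f {z : ℂ | z.re < 0}
  bdd : ∃ M : ℝ, ∀ z : ℂ, z.re < 0 → ‖f z‖ ≤ M
  lineIntPlus : ∀ x : ℝ, x ≤ 0 → ∀ θ : ℝ, Real.pi / 2 < θ → θ < Real.pi →
    IntegrableOn
      (fun r : ℝ => ‖f ((x : ℂ) + (r : ℂ) * Complex.exp ((θ : ℂ) * Complex.I))‖)
      (Set.Ioi 0)
  lineIntMinus : ∀ x : ℝ, x ≤ 0 → ∀ θ : ℝ, Real.pi / 2 < θ → θ < Real.pi →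
    IntegrableOn
      (fun r : ℝ => ‖f ((x : ℂ) + (r : ℂ) * Complex.exp (-(θ : ℂ) * Complex.I))‖)
      (Set.Ioi 0)

/-- The contour is the graph `re = gammaG (im)`. -/
def gammaG (θ ε y : ℝ) : ℝ := -max (-(Real.cos θ / Real.sin θ) * |y|) (Real.sqrt (ε ^ 2 - y ^ 2))

lemma gammaG_cont (θ ε : ℝ) : Continuous (gammaG θ ε) := by
  unfold gammaG; fun_prop

lemma gammaG_nonpos (θ ε y : ℝ) : gammaG θ ε y ≤ 0 := by
  unfold gammaG
  have := Real.sqrt_nonneg (ε ^ 2 - y ^ 2)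
  have := le_max_right (-(Real.cos θ / Real.sin θ) * |y|) (Real.sqrt (ε ^ 2 - y ^ 2))
  linarith

lemma ray_aux {θ ε t : ℝ} (hs : 0 < Real.sin θ) (hc : Real.cos θ < 0) (hε : 0 ≤ ε) (ht : ε ≤ t) :
    gammaG θ ε (t * Real.sin θ) = t * Real.cos θ := by
  unfold gammaG
  have ht0 : 0 ≤ t := hε.trans ht
  rw [abs_of_nonneg (by positivity)]
  have h1 : -(Real.cos θ / Real.sin θ) * (t * Real.sin θ) = - (t * Real.cos θ) := by
    field_simp
  rw [h1, max_eq_left, neg_neg]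
  apply Real.sqrt_le_iff.2
  constructor
  · nlinarith
  · have := Real.sin_sq_add_cos_sq θ
    have h2 : (t * Real.sin θ) ^ 2 + (t * Real.cos θ) ^ 2 = t ^ 2 := by
      rw [mul_pow, mul_pow, ← mul_add, this, mul_one]
    nlinarith

lemma gammaG_neg (θ ε y : ℝ) : gammaG θ ε (-y) = gammaG θ ε y := by
  simp [gammaG]

lemma sin_cos_facts {θ : ℝ} (hθ1 : Real.pi / 2 < θ) (hθ2 : θ < Real.pi) :
    0 < Real.sin θ ∧ Real.cos θ < 0 :=
  ⟨Real.sin_pos_of_pos_of_lt_pi (by linarith [Real.pi_pos]) hθ2,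
    Real.cos_neg_of_pi_div_two_lt_of_lt hθ1 (by linarith)⟩

lemma exp_re_im (θ : ℝ) : (Complex.exp ((θ : ℂ) * Complex.I)).re = Real.cos θ ∧
    (Complex.exp ((θ : ℂ) * Complex.I)).im = Real.sin θ :=
  ⟨Complex.exp_ofReal_mul_I_re θ, Complex.exp_ofReal_mul_I_im θ⟩

lemma exp_neg_re_im (θ : ℝ) : (Complex.exp (-(θ : ℂ) * Complex.I)).re = Real.cos θ ∧
    (Complex.exp (-(θ : ℂ) * Complex.I)).im = -Real.sin θ := by
  have := exp_re_im (-θ)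
  simpa using this

lemma gamma_graph {θ ε : ℝ} (hθ1 : Real.pi / 2 < θ) (hθ2 : θ < Real.pi) (hε : 0 ≤ ε) (t : ℝ) :
    (gammaCurve θ ε t).re = gammaG θ ε (gammaCurve θ ε t).im := by
  obtain ⟨hs, hc⟩ := sin_cos_facts hθ1 hθ2
  unfold gammaCurve
  split_ifs with h1 h2
  · have e : (-(t : ℂ)) = ((-t : ℝ) : ℂ) := by push_cast; rfl
    rw [e, Complex.re_ofReal_mul, Complex.im_ofReal_mul, (exp_neg_re_im θ).1, (exp_neg_re_im θ).2,
      mul_neg, gammaG_neg, ray_aux hs hc hε (by linarith)]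
  · have hε' : 0 < ε := by linarith
    rw [mul_comm Complex.I, Complex.re_ofReal_mul, Complex.im_ofReal_mul, (exp_re_im _).1,
      (exp_re_im _).2]
    set x := t * (Real.pi - θ) / ε with hx
    have hx1 : |x| ≤ Real.pi - θ := by
      rw [hx, abs_div, abs_mul, abs_of_pos hε', abs_of_pos (by linarith : 0 < Real.pi - θ),
        div_le_iff₀ hε', mul_comm]
      exact mul_le_mul_of_nonneg_left (abs_le.2 ⟨by linarith, h2.le⟩) (by linarith)
    have hcx : Real.cos (-x - Real.pi) = - Real.cos x := by
      rw [show -x - Real.pi = -(x + Real.pi) by ring, Real.cos_neg, Real.cos_add_pi]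
    have hsx : Real.sin (-x - Real.pi) = Real.sin x := by
      rw [show -x - Real.pi = -(x + Real.pi) by ring, Real.sin_neg, Real.sin_add_pi, neg_neg]
    rw [hcx, hsx]
    have hcos : - Real.cos θ ≤ Real.cos x := by
      rw [← Real.cos_abs x, ← Real.cos_pi_sub]
      exact Real.cos_le_cos_of_nonneg_of_le_pi (abs_nonneg _) (by linarith [Real.pi_pos]) hx1
    have hsin : |Real.sin x| ≤ Real.sin θ := by
      refine abs_le_of_sq_le_sq ?_ hs.le
      nlinarith [Real.sin_sq_add_cos_sq x, Real.sin_sq_add_cos_sq θ]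
    unfold gammaG
    have hsq : Real.sqrt (ε ^ 2 - (ε * Real.sin x) ^ 2) = ε * Real.cos x := by
      rw [show ε ^ 2 - (ε * Real.sin x) ^ 2 = (ε * Real.cos x) ^ 2 by
        nlinarith [Real.sin_sq_add_cos_sq x]]
      exact Real.sqrt_sq (mul_nonneg hε (by linarith))
    rw [hsq, max_eq_right]
    · ring
    · rw [abs_mul, abs_of_nonneg hε]
      have : -(Real.cos θ / Real.sin θ) * (ε * |Real.sin x|) ≤
          -(Real.cos θ / Real.sin θ) * (ε * Real.sin θ) := by
        apply mul_le_mul_of_nonneg_left (mul_le_mul_of_nonneg_left hsin hε)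
        rw [neg_nonneg]; exact div_nonpos_of_nonpos_of_nonneg hc.le hs.le
      have h3 : -(Real.cos θ / Real.sin θ) * (ε * Real.sin θ) = ε * (-Real.cos θ) := by
        field_simp
      rw [h3] at this
      exact this.trans (mul_le_mul_of_nonneg_left hcos hε)
  · rw [Complex.re_ofReal_mul, Complex.im_ofReal_mul, (exp_re_im θ).1, (exp_re_im θ).2,
      ray_aux hs hc hε (by linarith)]

lemma norm_exp1 (θ : ℝ) : ‖Complex.exp ((θ : ℂ) * Complex.I)‖ = 1 :=
  Complex.norm_exp_ofReal_mul_I θ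

lemma norm_exp2 (θ : ℝ) : ‖Complex.exp (-(θ : ℂ) * Complex.I)‖ = 1 := by
  simpa using Complex.norm_exp_ofReal_mul_I (-θ)

lemma norm_exp3 (θ : ℝ) : ‖Complex.exp (Complex.I * (θ : ℂ))‖ = 1 := by
  rw [mul_comm]; exact Complex.norm_exp_ofReal_mul_I θ

lemma gamma_norm {θ ε : ℝ} (hε : 0 ≤ ε) (t : ℝ) : |t| ≤ ‖gammaCurve θ ε t‖ := by
  unfold gammaCurve
  split_ifs with h1 h2
  · rw [norm_mul, norm_exp2, norm_neg, mul_one]; simp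
  · rw [norm_mul, norm_exp3, mul_one, Complex.norm_real, Real.norm_eq_abs, abs_of_nonneg hε]
    exact abs_le.2 ⟨by linarith, h2.le⟩
  · rw [norm_mul, norm_exp1, mul_one]; simp

lemma gammaDeriv_norm {θ ε : ℝ} (hθ1 : Real.pi / 2 < θ) (hθ2 : θ < Real.pi) (t : ℝ) :
    ‖gammaDeriv θ ε t‖ ≤ 4 := by
  unfold gammaDeriv
  split_ifs with h1 h2
  · rw [norm_neg, norm_exp2]; norm_num
  · rw [norm_mul, norm_exp3, mul_one, norm_mul, norm_neg, Complex.norm_I, one_mul,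
      Complex.norm_real, Real.norm_eq_abs, abs_of_pos (by linarith)]
    linarith [Real.pi_le_four, Real.pi_pos]
  · rw [norm_exp1]; norm_num

lemma gammaDeriv_meas (θ ε : ℝ) : Measurable (gammaDeriv θ ε) := by
  unfold gammaDeriv
  refine Measurable.ite measurableSet_Iic measurable_const
    (Measurable.ite measurableSet_Iio ?_ measurable_const)
  apply Continuous.measurable
  fun_prop

lemma arc_end (θ ε : ℝ) : (ε : ℂ) * Complex.exp (Complex.I *
    ((-(ε * (Real.pi - θ) / ε) - Real.pi : ℝ) : ℂ)) = (ε : ℂ) * Complex.exp ((θ : ℂ) * Complex.I) := by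
  rcases eq_or_ne ε 0 with rfl | h
  · simp
  · congr 1
    rw [Complex.exp_eq_exp_iff_exists_int]
    refine ⟨-1, ?_⟩
    rw [mul_div_cancel_left₀ _ h]
    push_cast; ring

lemma arc_start (θ ε : ℝ) : (ε : ℂ) * Complex.exp (Complex.I *
    ((-(-ε * (Real.pi - θ) / ε) - Real.pi : ℝ) : ℂ)) = (ε : ℂ) * Complex.exp (-(θ : ℂ) * Complex.I) := by
  rcases eq_or_ne ε 0 with rfl | h
  · simp
  · congr 2
    rw [neg_mul, neg_div, mul_div_cancel_left₀ _ h]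
    push_cast; ring

lemma gamma_cont {θ ε : ℝ} (hε : 0 ≤ ε) : Continuous (gammaCurve θ ε) := by
  have e : gammaCurve θ ε = fun t : ℝ => if t ≤ -ε then (-t : ℂ) * Complex.exp (-(θ : ℂ) * Complex.I)
    else if ε ≤ t then (t : ℂ) * Complex.exp ((θ : ℂ) * Complex.I) else
    (ε : ℂ) * Complex.exp (Complex.I * ((-(t * (Real.pi - θ) / ε) - Real.pi : ℝ) : ℂ)) := by
    funext t
    unfold gammaCurve
    by_cases h1 : t ≤ -ε
    · simp [h1]
    · by_cases h2 : t < ε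
      · simp [h1, h2]
      · simp [h1, h2, not_lt.1 h2]
  rw [e]
  refine Continuous.if_le (by fun_prop) (Continuous.if_le (by fun_prop) (by fun_prop)
    continuous_const continuous_id ?_) continuous_id continuous_const ?_
  · rintro x rfl
    exact (arc_end _ _).symm
  · rintro x rfl
    by_cases h : ε ≤ -ε
    · have : ε = 0 := by linarith
      subst this
      simp
    · rw [if_neg h, arc_start]; simp

lemma gamma_deriv {θ ε : ℝ} (hε : 0 ≤ ε) (t : ℝ) (ht : t ∉ ({-ε, ε} : Set ℝ)) :
    HasDerivAt (gammaCurve θ ε) (gammaDeriv θ ε t) t := by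
  simp only [mem_insert_iff, mem_singleton_iff, not_or] at ht
  have hid : HasDerivAt (fun t : ℝ => (t : ℂ)) 1 t := Complex.ofRealCLM.hasDerivAt
  rcases lt_trichotomy t (-ε) with h1 | h1 | h1
  · have e : gammaCurve θ ε =ᶠ[𝓝 t] fun t : ℝ => (-t : ℂ) * Complex.exp (-(θ : ℂ) * Complex.I) := by
      filter_upwards [Iio_mem_nhds h1] with u hu
      simp [gammaCurve, (mem_Iio.1 hu).le]
    have d : gammaDeriv θ ε t = (-1 : ℂ) * Complex.exp (-(θ : ℂ) * Complex.I) := by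
      simp [gammaDeriv, h1.le]
    rw [d]
    exact (hid.neg.mul_const _).congr_of_eventuallyEq e
  · exact absurd h1 ht.1
  · rcases lt_trichotomy t ε with h2 | h2 | h2
    · have e : gammaCurve θ ε =ᶠ[𝓝 t] fun t : ℝ => (ε : ℂ) * Complex.exp (Complex.I *
          ((-((t : ℂ) * ((Real.pi - θ : ℝ) : ℂ) / (ε : ℂ)) - (Real.pi : ℂ)))) := by
        filter_upwards [Iio_mem_nhds h2, Ioi_mem_nhds h1] with u hu hu'
        simp [gammaCurve, mem_Iio.1 hu, mem_Ioi.1 hu']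
      have hε' : (ε : ℂ) ≠ 0 := by
        have : ε ≠ 0 := by linarith
        exact_mod_cast this
      have := (((((hid.mul_const ((Real.pi - θ : ℝ) : ℂ)).div_const (ε : ℂ)).neg.sub_const
        (Real.pi : ℂ)).const_mul Complex.I).cexp).const_mul (ε : ℂ)
      refine (this.congr_of_eventuallyEq e).congr_deriv ?_
      simp only [gammaDeriv, not_le.2 h1, h2, if_true, if_false]
      simp only [Pi.neg_apply]
      push_cast
      generalize Complex.exp _ = E
      field_simp
    · exact absurd h2 ht.2
    · have e : gammaCurve θ ε =ᶠ[𝓝 t] fun t : ℝ => (t : ℂ) * Complex.exp ((θ : ℂ) * Complex.I) := by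
        filter_upwards [Ioi_mem_nhds h2] with u hu
        have hu' := mem_Ioi.1 hu
        simp [gammaCurve, not_le.2 (by linarith : -ε < u), not_lt.2 hu'.le]
      have d : gammaDeriv θ ε t = (1 : ℂ) * Complex.exp ((θ : ℂ) * Complex.I) := by
        simp [gammaDeriv, not_le.2 h1, not_lt.2 h2.le]
      rw [d]
      exact (hid.mul_const _).congr_of_eventuallyEq e

lemma gamma_re_neg {θ ε : ℝ} (hθ1 : Real.pi / 2 < θ) (hθ2 : θ < Real.pi) (hε : 0 ≤ ε) {t : ℝ}
    (ht : t ≠ 0) : (gammaCurve θ ε t).re < 0 := by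
  have h := gamma_graph hθ1 hθ2 hε t
  obtain ⟨hs, hc⟩ := sin_cos_facts hθ1 hθ2
  refine lt_of_le_of_ne (h ▸ gammaG_nonpos _ _ _) fun h0 => ?_
  have hn := gamma_norm (θ := θ) hε t
  rw [h0] at h
  unfold gammaG at h
  set y := (gammaCurve θ ε t).im with hy
  have hm : max (-(Real.cos θ / Real.sin θ) * |y|) (Real.sqrt (ε ^ 2 - y ^ 2)) = 0 := by linarith
  have h1 := le_max_left (-(Real.cos θ / Real.sin θ) * |y|) (Real.sqrt (ε ^ 2 - y ^ 2))
  rw [hm] at h1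
  have hc' : 0 < -(Real.cos θ / Real.sin θ) := by
    rw [neg_pos]; exact div_neg_of_neg_of_pos hc hs
  have hy0 : y = 0 := by
    by_contra hne
    have := mul_pos hc' (abs_pos.2 hne)
    linarith
  have : gammaCurve θ ε t = 0 := Complex.ext h0 (hy ▸ hy0)
  rw [this, norm_zero] at hn
  exact ht (abs_eq_zero.1 (le_antisymm hn (abs_nonneg _)))

lemma graph_shift {θ ε : ℝ} (hθ1 : Real.pi / 2 < θ) (hθ2 : θ < Real.pi) (hε : 0 ≤ ε) (t s : ℝ) :
    (gammaCurve θ ε t + (s : ℂ)).re - gammaG θ ε (gammaCurve θ ε t + (s : ℂ)).im = s := by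
  have := gamma_graph hθ1 hθ2 hε t
  simp [← this]

/-- the left region -/
def leftReg (θ ε : ℝ) : Set ℂ := {z | z.re - gammaG θ ε z.im < 0}

lemma leftReg_open (θ ε : ℝ) : IsOpen (leftReg θ ε) := by
  have := gammaG_cont θ ε
  exact isOpen_lt (by fun_prop) continuous_const

lemma leftReg_re {θ ε : ℝ} {z : ℂ} (hz : z ∈ leftReg θ ε) : z.re < 0 := by
  have := gammaG_nonpos θ ε z.im
  have h2 : z.re - gammaG θ ε z.im < 0 := hz
  linarith

lemma shift_mem {θ ε : ℝ} (hθ1 : Real.pi / 2 < θ) (hθ2 : θ < Real.pi) (hε : 0 ≤ ε) (t : ℝ) {s : ℝ}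
    (hs : s < 0) : gammaCurve θ ε t + (s : ℂ) ∈ leftReg θ ε := by
  have := graph_shift hθ1 hθ2 hε t s
  change (gammaCurve θ ε t + (s : ℂ)).re - gammaG θ ε (gammaCurve θ ε t + (s : ℂ)).im < 0
  rw [this]; exact hs

lemma shift_norm {θ ε : ℝ} (hθ1 : Real.pi / 2 < θ) (hθ2 : θ < Real.pi) (hε : 0 ≤ ε) (t : ℝ) {s : ℝ}
    (hs : s ≤ 0) : |t| ≤ ‖gammaCurve θ ε t + (s : ℂ)‖ ∧ |s| ≤ ‖gammaCurve θ ε t + (s : ℂ)‖ := by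
  have h1 := gamma_norm (θ := θ) hε t
  have h2 : (gammaCurve θ ε t).re ≤ 0 := gamma_graph hθ1 hθ2 hε t ▸ gammaG_nonpos _ _ _
  constructor
  · refine h1.trans ?_
    rw [Complex.norm_def, Complex.norm_def]
    apply Real.sqrt_le_sqrt
    simp only [Complex.normSq_apply, Complex.add_re, Complex.add_im, Complex.ofReal_re,
      Complex.ofReal_im, add_zero]
    nlinarith
  · refine le_trans ?_ (Complex.abs_re_le_norm _)
    simp only [Complex.add_re, Complex.ofReal_re]
    rw [abs_of_nonpos hs, abs_of_nonpos (by linarith)]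
    linarith

lemma fin_shift {θ ε : ℝ} (hθ1 : Real.pi / 2 < θ) (hθ2 : θ < Real.pi) (hε : 0 ≤ ε)
    {H : ℂ → ℂ} (hH : DifferentiableOn ℂ H (leftReg θ ε)) {T s₁ s₂ : ℝ}
    (h1 : s₁ < 0) (h2 : s₂ < 0) :
    (∫ t in (-T)..T, H (gammaCurve θ ε t + (s₂ : ℂ)) * gammaDeriv θ ε t) -
      (∫ t in (-T)..T, H (gammaCurve θ ε t + (s₁ : ℂ)) * gammaDeriv θ ε t) =
    ∫ s in s₁..s₂, (H (gammaCurve θ ε T + (s : ℂ)) - H (gammaCurve θ ε (-T) + (s : ℂ))) := by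
  have hopen := leftReg_open θ ε
  have hγ := gamma_cont (θ := θ) hε
  have hD : DifferentiableOn ℂ (deriv H) (leftReg θ ε) := hH.deriv hopen
  have hneg : ∀ s ∈ uIcc s₁ s₂, s < 0 := fun s hs => by
    have := hs.2
    exact this.trans_lt (max_lt h1 h2)
  have hint : ∀ s : ℝ, s < 0 → ∀ G : ℂ → ℂ, ContinuousOn G (leftReg θ ε) →
      IntervalIntegrable (fun t => G (gammaCurve θ ε t + (s : ℂ)) * gammaDeriv θ ε t)
        volume (-T) T := by
    intro s hs G hG
    have hc : Continuous fun t => G (gammaCurve θ ε t + (s : ℂ)) :=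
      hG.comp_continuous (by fun_prop) fun t => shift_mem hθ1 hθ2 hε t hs
    have := (hc.intervalIntegrable (μ := volume) (-T) T)
    rw [intervalIntegrable_iff] at this ⊢
    exact Integrable.mul_bdd (c := 4) this (gammaDeriv_meas θ ε).aestronglyMeasurable
      (ae_of_all _ fun t => gammaDeriv_norm hθ1 hθ2 t)
  rw [← intervalIntegral.integral_sub (hint _ h2 _ hH.continuousOn) (hint _ h1 _ hH.continuousOn)]
  have hin : ∀ t : ℝ, H (gammaCurve θ ε t + (s₂ : ℂ)) * gammaDeriv θ ε t -
      H (gammaCurve θ ε t + (s₁ : ℂ)) * gammaDeriv θ ε t =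
      ∫ s in s₁..s₂, deriv H (gammaCurve θ ε t + (s : ℂ)) * gammaDeriv θ ε t := by
    intro t
    symm
    refine intervalIntegral.integral_eq_sub_of_hasDerivAt
      (f := fun s : ℝ => H (gammaCurve θ ε t + (s : ℂ)) * gammaDeriv θ ε t) ?_ ?_
    · intro s hs
      have hm := shift_mem hθ1 hθ2 hε t (hneg s hs)
      have hd : HasDerivAt H _ _ := (hH.differentiableAt (hopen.mem_nhds hm)).hasDerivAt
      have hid : HasDerivAt (fun s : ℝ => gammaCurve θ ε t + (s : ℂ)) 1 s :=
        (Complex.ofRealCLM.hasDerivAt (x := s)).const_add _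
      have := (hd.comp s hid).mul_const (gammaDeriv θ ε t)
      simpa using this
    · apply ContinuousOn.intervalIntegrable
      refine ContinuousOn.mul ?_ continuousOn_const
      exact hD.continuousOn.comp (by fun_prop) fun s hs => shift_mem hθ1 hθ2 hε t (hneg s hs)
  have hout : ∀ s ∈ uIcc s₁ s₂, H (gammaCurve θ ε T + (s : ℂ)) - H (gammaCurve θ ε (-T) + (s : ℂ)) =
      ∫ t in (-T)..T, deriv H (gammaCurve θ ε t + (s : ℂ)) * gammaDeriv θ ε t := by
    intro s hs
    symm
    refine integral_eq_of_hasDerivAt_off_countable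
      (fun t : ℝ => H (gammaCurve θ ε t + (s : ℂ))) _ (s := {-ε, ε})
      (Set.Finite.countable (by simp)) ?_ ?_ (hint s (hneg s hs) _ hD.continuousOn)
    · exact (hH.continuousOn.comp_continuous (by fun_prop)
        fun t => shift_mem hθ1 hθ2 hε t (hneg s hs)).continuousOn
    · intro t ht
      have hm := shift_mem hθ1 hθ2 hε t (hneg s hs)
      have hd : HasDerivAt H _ _ := (hH.differentiableAt (hopen.mem_nhds hm)).hasDerivAt
      exact hd.comp t ((gamma_deriv hε t ht.2).add_const _)
  rw [intervalIntegral.integral_congr (fun t _ => hin t), intervalIntegral.integral_congr hout]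
  apply intervalIntegral_intervalIntegral_swap
  have hcont : ContinuousOn (fun p : ℝ × ℝ => deriv H (gammaCurve θ ε p.1 + (p.2 : ℂ)))
      (uIcc (-T) T ×ˢ uIcc s₁ s₂) :=
    hD.continuousOn.comp (by fun_prop) fun p hp => shift_mem hθ1 hθ2 hε p.1 (hneg p.2 hp.2)
  have hI := (hcont.integrableOn_compact (μ := volume)
    (isCompact_uIcc.prod isCompact_uIcc)).mono_set
    (prod_mono (uIoc_subset_uIcc (a := -T) (b := T)) (uIoc_subset_uIcc (a := s₁) (b := s₂)))
  exact Integrable.mul_bdd (c := 4) hI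
    ((gammaDeriv_meas θ ε).comp measurable_fst).aestronglyMeasurable
    (ae_of_all _ fun p => gammaDeriv_norm hθ1 hθ2 p.1)

lemma bound_int (C : ℝ) : Integrable (fun t : ℝ => 4 * (C * (1 + t ^ 2)⁻¹)) :=
  (integrable_inv_one_add_sq.const_mul C).const_mul 4

lemma inv_mono {C a b : ℝ} (hC : 0 ≤ C) (h : |a| ≤ b) : C * (1 + b ^ 2)⁻¹ ≤ C * (1 + a ^ 2)⁻¹ := by
  have : a ^ 2 ≤ b ^ 2 := by rw [← sq_abs a]; gcongr
  gcongr

lemma shift_zero {θ ε : ℝ} (hθ1 : Real.pi / 2 < θ) (hθ2 : θ < Real.pi) (hε : 0 ≤ ε)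
    {H : ℂ → ℂ} (hH : DifferentiableOn ℂ H (leftReg θ ε)) {C : ℝ} (hC : 0 ≤ C)
    (hb : ∀ z ∈ leftReg θ ε, ‖H z‖ ≤ C * (1 + ‖z‖ ^ 2)⁻¹) {s : ℝ} (hs : s < 0) :
    ∫ t : ℝ, H (gammaCurve θ ε t + (s : ℂ)) * gammaDeriv θ ε t = 0 := by
  have hγ := gamma_cont (θ := θ) hε
  have hmeas : ∀ s : ℝ, s < 0 → AEStronglyMeasurable
      (fun t => H (gammaCurve θ ε t + (s : ℂ)) * gammaDeriv θ ε t) volume := by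
    intro s hs
    have hc : Continuous fun t => H (gammaCurve θ ε t + (s : ℂ)) :=
      hH.continuousOn.comp_continuous (by fun_prop) fun t => shift_mem hθ1 hθ2 hε t hs
    exact hc.aestronglyMeasurable.mul (gammaDeriv_meas θ ε).aestronglyMeasurable
  have hbd : ∀ s : ℝ, s < 0 → ∀ t,
      ‖H (gammaCurve θ ε t + (s : ℂ)) * gammaDeriv θ ε t‖ ≤ 4 * (C * (1 + t ^ 2)⁻¹) := by
    intro s hs t
    rw [norm_mul, mul_comm]
    have h1 := hb _ (shift_mem hθ1 hθ2 hε t hs)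
    have h2 := inv_mono hC (shift_norm hθ1 hθ2 hε t hs.le).1
    exact mul_le_mul (gammaDeriv_norm hθ1 hθ2 t) (h1.trans h2) (norm_nonneg _) (by norm_num)
  have hint : ∀ s : ℝ, s < 0 → Integrable
      (fun t => H (gammaCurve θ ε t + (s : ℂ)) * gammaDeriv θ ε t) volume :=
    fun s hs => (bound_int C).mono' (hmeas s hs) (ae_of_all _ (hbd s hs))
  have hconst : ∀ s₁ : ℝ, s₁ < 0 → ∫ t : ℝ, H (gammaCurve θ ε t + (s : ℂ)) * gammaDeriv θ ε t =
      ∫ t : ℝ, H (gammaCurve θ ε t + (s₁ : ℂ)) * gammaDeriv θ ε t := by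
    intro s₁ hs₁
    have hl := fun s hs => intervalIntegral_tendsto_integral (hint s hs)
      tendsto_neg_atTop_atBot (tendsto_id (α := ℝ) (x := atTop))
    have h3 := (hl s hs).sub (hl s₁ hs₁)
    have h4 : Tendsto (fun T : ℝ => (C * (1 + T ^ 2)⁻¹ + C * (1 + T ^ 2)⁻¹) * |s - s₁|) atTop (𝓝 0) := by
      have : Tendsto (fun T : ℝ => (1 + T ^ 2)⁻¹) atTop (𝓝 0) :=
        tendsto_inv_atTop_zero.comp (tendsto_atTop_add_const_left _ _ (tendsto_pow_atTop two_ne_zero))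
      have := ((this.const_mul C).add (this.const_mul C)).mul_const |s - s₁|
      simpa using this
    rw [← sub_eq_zero]
    refine tendsto_nhds_unique h3 (squeeze_zero_norm (fun T => ?_) h4)
    simp only [id]
    rw [fin_shift hθ1 hθ2 hε hH hs₁ hs]
    apply intervalIntegral.norm_integral_le_of_norm_le_const
    intro u hu
    have hu0 : u < 0 := hu.2.trans_lt (max_lt hs₁ hs)
    refine (norm_sub_le _ _).trans (add_le_add ?_ ?_)
    · exact (hb _ (shift_mem hθ1 hθ2 hε _ hu0)).trans
        (inv_mono hC (shift_norm hθ1 hθ2 hε T hu0.le).1)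
    · refine (hb _ (shift_mem hθ1 hθ2 hε _ hu0)).trans
        (inv_mono hC ?_)
      simpa using (shift_norm hθ1 hθ2 hε (-T) hu0.le).1
  have hlim : Tendsto (fun s₁ : ℝ => ∫ t : ℝ, H (gammaCurve θ ε t + (s₁ : ℂ)) * gammaDeriv θ ε t)
      atBot (𝓝 (∫ t : ℝ, (0 : ℂ))) := by
    refine tendsto_integral_filter_of_dominated_convergence _ ?_ ?_ (bound_int C) ?_
    · filter_upwards [Iio_mem_atBot 0] with s hs using hmeas s hs
    · filter_upwards [Iio_mem_atBot 0] with s hs using ae_of_all _ (hbd s hs)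
    · refine ae_of_all _ fun t => ?_
      have h4 : Tendsto (fun s : ℝ => C * (1 + s ^ 2)⁻¹ * 4) atBot (𝓝 0) := by
        have h5 : Tendsto (fun s : ℝ => s ^ 2) atBot atTop := by
          have := (tendsto_pow_atTop (α := ℝ) two_ne_zero).comp tendsto_neg_atBot_atTop
          refine this.congr fun s => ?_
          simp
        have : Tendsto (fun T : ℝ => (1 + T ^ 2)⁻¹) atBot (𝓝 0) :=
          tendsto_inv_atTop_zero.comp (tendsto_atTop_add_const_left _ _ h5)
        simpa using (this.const_mul C).mul_const 4
      refine squeeze_zero_norm' ?_ h4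
      filter_upwards [Iio_mem_atBot 0] with s hs
      rw [norm_mul]
      have hs' : s < 0 := hs
      refine mul_le_mul ((hb _ (shift_mem hθ1 hθ2 hε _ hs)).trans
        (inv_mono hC (shift_norm hθ1 hθ2 hε t hs'.le).2)) (gammaDeriv_norm hθ1 hθ2 t)
        (norm_nonneg _) (by positivity)
  rw [integral_zero] at hlim
  refine tendsto_nhds_unique (tendsto_const_nhds.congr' ?_) hlim
  filter_upwards [Iio_mem_atBot 0] with s hs using hconst s hs

lemma mu_lower {μ : ℝ} (hμ : 1 ≤ μ) {z : ℂ} (hz : z.re ≤ 0) :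
    μ ≤ ‖(μ : ℂ) - z‖ ∧ 1 + ‖z‖ ≤ 2 * ‖(μ : ℂ) - z‖ := by
  have h1 : μ ≤ ‖(μ : ℂ) - z‖ := by
    refine le_trans ?_ (Complex.re_le_norm _)
    simp; exact hz
  have h2 : ‖z‖ ≤ ‖(μ : ℂ) - z‖ := by
    rw [Complex.norm_def, Complex.norm_def]
    apply Real.sqrt_le_sqrt
    simp only [Complex.normSq_apply, Complex.sub_re, Complex.sub_im, Complex.ofReal_re,
      Complex.ofReal_im]
    nlinarith
  exact ⟨h1, by linarith⟩

lemma mu_ne {μ : ℝ} (hμ : 1 ≤ μ) {z : ℂ} (hz : z.re ≤ 0) : (μ : ℂ) - z ≠ 0 := by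
  have := (mu_lower hμ hz).1
  intro h
  rw [h, norm_zero] at this
  linarith

lemma mu_factor {μ : ℝ} (hμ : 1 ≤ μ) {z : ℂ} (hz : z.re ≤ 0) :
    ‖(μ : ℂ) / ((μ : ℂ) - z)‖ ≤ 1 ∧ ‖(μ : ℂ) / ((μ : ℂ) - z)‖ ≤ 2 * μ * (1 + ‖z‖)⁻¹ := by
  obtain ⟨h1, h2⟩ := mu_lower hμ hz
  have h0 : 0 < ‖(μ : ℂ) - z‖ := by linarith
  have hz0 : 0 < 1 + ‖z‖ := by positivity
  rw [norm_div, Complex.norm_real, Real.norm_eq_abs, abs_of_pos (by linarith)]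
  constructor
  · rw [div_le_one h0]; exact h1
  · rw [← div_eq_mul_inv, div_le_div_iff₀ h0 hz0]
    nlinarith

lemma gamma_re_nonpos {θ ε : ℝ} (hθ1 : Real.pi / 2 < θ) (hθ2 : θ < Real.pi) (hε : 0 ≤ ε) (t : ℝ) :
    (gammaCurve θ ε t).re ≤ 0 := gamma_graph hθ1 hθ2 hε t ▸ gammaG_nonpos _ _ _

lemma two_inv {a : ℝ} (ha : 0 ≤ a) : (1 + a)⁻¹ * (1 + a)⁻¹ ≤ (1 + a ^ 2)⁻¹ := by
  rw [← mul_inv]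
  apply inv_anti₀ (by positivity)
  nlinarith

lemma ae_ne_zero : ∀ᵐ t : ℝ, t ≠ 0 := by
  have : (volume : Measure ℝ) {0} = 0 := by simp
  exact compl_mem_ae_iff.2 this

lemma boundary_zero {θ ε : ℝ} (hθ1 : Real.pi / 2 < θ) (hθ2 : θ < Real.pi) (hε : 0 ≤ ε)
    {q : ℂ → ℂ} (hq : DifferentiableOn ℂ q (leftReg θ ε)) {C : ℝ} (hC : 0 ≤ C)
    (hb : ∀ z ∈ leftReg θ ε, ‖q z‖ ≤ C * (1 + ‖z‖)⁻¹)
    (hqc : ∀ t : ℝ, t ≠ 0 → ContinuousAt q (gammaCurve θ ε t)) {μ : ℝ} (hμ : 1 ≤ μ) :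
    ∫ t : ℝ, q (gammaCurve θ ε t) * ((μ : ℂ) / ((μ : ℂ) - gammaCurve θ ε t)) * gammaDeriv θ ε t
      = 0 := by
  have hγ := gamma_cont (θ := θ) hε
  have hH : DifferentiableOn ℂ (fun z => q z * ((μ : ℂ) / ((μ : ℂ) - z))) (leftReg θ ε) := by
    refine hq.mul ?_
    refine DifferentiableOn.div (by fun_prop) (by fun_prop) ?_
    intro z hz
    exact mu_ne hμ (leftReg_re hz).le
  have hC' : 0 ≤ C * (2 * μ) := by positivity
  have hbH : ∀ z ∈ leftReg θ ε, ‖q z * ((μ : ℂ) / ((μ : ℂ) - z))‖ ≤ C * (2 * μ) * (1 + ‖z‖ ^ 2)⁻¹ := by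
    intro z hz
    rw [norm_mul]
    have h1 := hb z hz
    have h2 := (mu_factor hμ (leftReg_re hz).le).2
    calc _ ≤ C * (1 + ‖z‖)⁻¹ * (2 * μ * (1 + ‖z‖)⁻¹) := by gcongr
      _ = C * (2 * μ) * ((1 + ‖z‖)⁻¹ * (1 + ‖z‖)⁻¹) := by ring
      _ ≤ _ := mul_le_mul_of_nonneg_left (two_inv (norm_nonneg z)) hC'
  have hz := fun s (hs : s < 0) => shift_zero hθ1 hθ2 hε hH hC' hbH hs
  have hlim : Tendsto (fun s : ℝ => ∫ t : ℝ, (fun z => q z * ((μ : ℂ) / ((μ : ℂ) - z)))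
      (gammaCurve θ ε t + (s : ℂ)) * gammaDeriv θ ε t) (𝓝[<] 0)
      (𝓝 (∫ t : ℝ, q (gammaCurve θ ε t) * ((μ : ℂ) / ((μ : ℂ) - gammaCurve θ ε t)) *
        gammaDeriv θ ε t)) := by
    refine tendsto_integral_filter_of_dominated_convergence _ ?_ ?_ (bound_int (C * (2 * μ))) ?_
    · filter_upwards [self_mem_nhdsWithin] with s hs
      have hc : Continuous fun t => (fun z => q z * ((μ : ℂ) / ((μ : ℂ) - z)))
          (gammaCurve θ ε t + (s : ℂ)) :=
        hH.continuousOn.comp_continuous (by fun_prop) fun t => shift_mem hθ1 hθ2 hε t hs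
      exact hc.aestronglyMeasurable.mul (gammaDeriv_meas θ ε).aestronglyMeasurable
    · filter_upwards [self_mem_nhdsWithin] with s hs
      refine ae_of_all _ fun t => ?_
      have hs' : s < 0 := hs
      rw [norm_mul, mul_comm]
      have h1 := hbH _ (shift_mem hθ1 hθ2 hε t hs)
      have h2 := inv_mono hC' (shift_norm hθ1 hθ2 hε t hs'.le).1
      exact mul_le_mul (gammaDeriv_norm hθ1 hθ2 t) (h1.trans h2) (norm_nonneg _) (by norm_num)
    · filter_upwards [ae_ne_zero] with t ht
      have hca : ContinuousAt (fun z => q z * ((μ : ℂ) / ((μ : ℂ) - z))) (gammaCurve θ ε t) := by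
        refine (hqc t ht).mul ?_
        refine ContinuousAt.div (by fun_prop) (by fun_prop) ?_
        exact mu_ne hμ (gamma_re_nonpos hθ1 hθ2 hε t)
      have hsh : Tendsto (fun s : ℝ => gammaCurve θ ε t + (s : ℂ)) (𝓝[<] 0)
          (𝓝 (gammaCurve θ ε t)) := by
        have : Continuous (fun s : ℝ => gammaCurve θ ε t + (s : ℂ)) := by fun_prop
        have := this.tendsto 0
        simp only [Complex.ofReal_zero, add_zero] at this
        exact this.mono_left nhdsWithin_le_nhds
      exact (hca.tendsto.comp hsh).mul_const _
  refine tendsto_nhds_unique hlim (tendsto_const_nhds.congr' ?_)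
  filter_upwards [self_mem_nhdsWithin] with s hs using (hz s hs).symm

lemma mu_one (z : ℂ) : Tendsto (fun μ : ℝ => (μ : ℂ) / ((μ : ℂ) - z)) atTop (𝓝 1) := by
  have h1 : Tendsto (fun μ : ℝ => ((1 : ℂ) - z * ((μ⁻¹ : ℝ) : ℂ))⁻¹) atTop (𝓝 1) := by
    have h0 : Tendsto (fun μ : ℝ => ((μ⁻¹ : ℝ) : ℂ)) atTop (𝓝 ((0 : ℝ) : ℂ)) :=
      (Complex.continuous_ofReal.tendsto 0).comp tendsto_inv_atTop_zero
    have := ((h0.const_mul z).const_sub 1).inv₀ (by simp)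
    simpa using this
  refine h1.congr' ?_
  filter_upwards [Ioi_mem_atTop 0] with μ hμ
  have : (μ : ℂ) ≠ 0 := by exact_mod_cast (ne_of_gt hμ)
  push_cast
  rw [show (1 : ℂ) - z * (μ : ℂ)⁻¹ = ((μ : ℂ) - z) / μ by field_simp, inv_div]

lemma mu_lim {θ ε : ℝ} (hθ1 : Real.pi / 2 < θ) (hθ2 : θ < Real.pi) (hε : 0 ≤ ε)
    {u : ℝ → ℂ} (hu : Integrable u) :
    Tendsto (fun μ : ℝ => ∫ t : ℝ, u t * ((μ : ℂ) / ((μ : ℂ) - gammaCurve θ ε t))) atTop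
      (𝓝 (∫ t : ℝ, u t)) := by
  have hγ := gamma_cont (θ := θ) hε
  refine tendsto_integral_filter_of_dominated_convergence (fun t => ‖u t‖) ?_ ?_ hu.norm ?_
  · filter_upwards [Ici_mem_atTop 1] with μ hμ
    refine hu.aestronglyMeasurable.mul (Continuous.aestronglyMeasurable ?_)
    exact Continuous.div (by fun_prop) (by fun_prop)
      fun t => mu_ne hμ (gamma_re_nonpos hθ1 hθ2 hε t)
  · filter_upwards [Ici_mem_atTop 1] with μ hμ
    refine ae_of_all _ fun t => ?_
    rw [norm_mul]
    exact mul_le_of_le_one_right (norm_nonneg _) (mu_factor hμ (gamma_re_nonpos hθ1 hθ2 hε t)).1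
  · refine ae_of_all _ fun t => ?_
    have := (mu_one (gammaCurve θ ε t)).const_mul (u t)
    simpa using this

lemma dist_closed {S : Set ℂ} (hS : IsClosed S) {l : ℂ} (hl : l ∉ S) :
    ∃ d > 0, ∀ z ∈ S, d ≤ ‖z - l‖ := by
  obtain ⟨d, hd, h⟩ := Metric.isOpen_iff.1 hS.isOpen_compl l hl
  refine ⟨d, hd, fun z hz => ?_⟩
  by_contra hlt
  exact h (show z ∈ Metric.ball l d by rw [Metric.mem_ball, dist_eq_norm]; linarith) hz

lemma inv_bound {d : ℝ} (hd : 0 < d) {z l : ℂ} (h : d ≤ ‖z - l‖) :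
    ‖z - l‖⁻¹ ≤ ((1 + ‖l‖) / d + 1) * (1 + ‖z‖)⁻¹ := by
  have h0 : 0 < ‖z - l‖ := by linarith
  have h1 : ‖z‖ ≤ ‖z - l‖ + ‖l‖ := by simpa using norm_add_le (z - l) l
  have hz : 0 < 1 + ‖z‖ := by positivity
  rw [← div_eq_mul_inv, ← one_div, div_le_div_iff₀ h0 hz]
  have h2 : (1 + ‖l‖) / d * ‖z - l‖ ≥ 1 + ‖l‖ := by
    rw [div_mul_eq_mul_div, ge_iff_le, le_div_iff₀ hd]
    gcongr
  linarith

lemma range_closed {θ ε : ℝ} (hε : 0 ≤ ε) : IsClosed (range (gammaCurve θ ε)) := by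
  have : IsProperMap (gammaCurve θ ε) := by
    rw [isProperMap_iff_tendsto_cocompact]
    refine ⟨gamma_cont hε, ?_⟩
    rw [← Metric.cobounded_eq_cocompact, ← Metric.cobounded_eq_cocompact,
      ← tendsto_norm_atTop_iff_cobounded]
    exact tendsto_atTop_mono (fun t => gamma_norm hε t) tendsto_norm_cobounded_atTop
  exact this.isClosedMap.isClosed_range

lemma f_int {f : ℂ → ℂ} (hf : MemHaInf f) {θ ε : ℝ}
    (hθ1 : Real.pi / 2 < θ) (hθ2 : θ < Real.pi) (hε : 0 ≤ ε) :
    Integrable (fun t => f (gammaCurve θ ε t)) := by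
  have hγ := gamma_cont (θ := θ) hε
  have hm : AEStronglyMeasurable (fun t => f (gammaCurve θ ε t)) volume := by
    have h1 : ContinuousOn (fun t => f (gammaCurve θ ε t)) ({0}ᶜ : Set ℝ) :=
      hf.holo.continuousOn.comp hγ.continuousOn fun t ht => gamma_re_neg hθ1 hθ2 hε ht
    have h2 := h1.aestronglyMeasurable (μ := volume) (measurableSet_singleton 0).compl
    rwa [Measure.restrict_eq_self_of_ae_mem] at h2
    exact ae_ne_zero
  obtain ⟨M, hM⟩ := hf.bdd
  rw [← integrableOn_univ, show (univ : Set ℝ) = (Iic (-ε) ∪ Icc (-ε) ε) ∪ Ici ε by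
    ext x; simp only [mem_univ, mem_union, mem_Iic, mem_Icc, mem_Ici, true_iff]
    rcases le_total x (-ε) with h | h
    · exact Or.inl (Or.inl h)
    · rcases le_total x ε with h' | h'
      · exact Or.inl (Or.inr ⟨h, h'⟩)
      · exact Or.inr h']
  refine (IntegrableOn.union ?_ ?_).union ?_
  · have h1 := (hf.lineIntMinus 0 le_rfl θ hθ1 hθ2)
    have h2 : IntegrableOn (fun r : ℝ => ‖f (((0 : ℝ) : ℂ) + ((-r : ℝ) : ℂ) *
        Complex.exp (-(θ : ℂ) * Complex.I))‖) (Iio 0) := by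
      have h1' : IntegrableOn (fun r : ℝ => ‖f (((0 : ℝ) : ℂ) + (r : ℂ) *
        Complex.exp (-(θ : ℂ) * Complex.I))‖) (Ioi (-0)) := by rw [neg_zero]; exact h1
      exact h1'.comp_neg_Iio
    have h3 := ((integrableOn_Iic_iff_integrableOn_Iio (by simp)).2 h2).mono_set
      (Iic_subset_Iic.2 (by linarith : -ε ≤ 0))
    refine Integrable.mono' h3 hm.restrict ?_
    refine (ae_restrict_iff' measurableSet_Iic).2 (ae_of_all _ fun t ht => ?_)
    have ht' : t ≤ -ε := ht
    simp [gammaCurve, ht']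
  · refine Measure.integrableOn_of_bounded (M := M) (by simp) hm ?_
    refine ae_restrict_of_ae ?_
    filter_upwards [ae_ne_zero] with t ht
    exact hM _ (gamma_re_neg hθ1 hθ2 hε ht)
  · have h1 := (hf.lineIntPlus 0 le_rfl θ hθ1 hθ2)
    have h3 := ((integrableOn_Ici_iff_integrableOn_Ioi (by simp)).2 h1).mono_set (Ici_subset_Ici.2 hε)
    refine Integrable.mono' h3 hm.restrict ?_
    refine (ae_restrict_iff' measurableSet_Ici).2 ?_
    filter_upwards [ae_ne_zero] with t ht0 ht
    have ht' : ε ≤ t := ht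
    have : 0 < t := lt_of_le_of_ne (hε.trans ht') (Ne.symm ht0)
    have h4 : ¬ (t ≤ -ε) := by linarith
    simp [gammaCurve, h4, not_lt.2 ht']

lemma part_one {f : ℂ → ℂ} (hf : MemHaInf f) {θ ε : ℝ}
    (hθ1 : Real.pi / 2 < θ) (hθ2 : θ < Real.pi) (hε : 0 ≤ ε) {l : ℂ}
    (hl : l ∉ range (gammaCurve θ ε)) :
    Integrable (fun t => f (gammaCurve θ ε t) / (gammaCurve θ ε t - l) * gammaDeriv θ ε t) ∧
    DifferentiableAt ℂ (fun l => ∫ t, f (gammaCurve θ ε t) / (gammaCurve θ ε t - l) *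
      gammaDeriv θ ε t) l := by
  have hγ := gamma_cont (θ := θ) hε
  have hg : Integrable (fun t => f (gammaCurve θ ε t) * gammaDeriv θ ε t) :=
    (f_int hf hθ1 hθ2 hε).mul_bdd (c := 4) (gammaDeriv_meas θ ε).aestronglyMeasurable
      (ae_of_all _ fun t => gammaDeriv_norm hθ1 hθ2 t)
  have hmi : ∀ l : ℂ, AEStronglyMeasurable (fun t => (gammaCurve θ ε t - l)⁻¹) volume := fun l =>
    (Measurable.inv (by fun_prop)).aestronglyMeasurable
  obtain ⟨d, hd, h⟩ := dist_closed (range_closed hε) hl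
  have e : ∀ l : ℂ, (fun t => f (gammaCurve θ ε t) / (gammaCurve θ ε t - l) * gammaDeriv θ ε t) =
      fun t => f (gammaCurve θ ε t) * gammaDeriv θ ε t * (gammaCurve θ ε t - l)⁻¹ := by
    intro l; funext t; rw [div_eq_mul_inv]; ring
  simp only [e]
  have hI : Integrable (fun t => f (gammaCurve θ ε t) * gammaDeriv θ ε t * (gammaCurve θ ε t - l)⁻¹) := by
    refine hg.mul_bdd (c := d⁻¹) (hmi l) (ae_of_all _ fun t => ?_)
    rw [norm_inv]
    exact inv_anti₀ hd (h _ (mem_range_self t))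
  refine ⟨hI, ?_⟩
  have hlow : ∀ x ∈ Metric.ball l (d / 2), ∀ t, d / 2 ≤ ‖gammaCurve θ ε t - x‖ := by
    intro x hx t
    have h1 := h _ (mem_range_self t)
    rw [Metric.mem_ball, dist_eq_norm] at hx
    have : ‖gammaCurve θ ε t - l‖ ≤ ‖gammaCurve θ ε t - x‖ + ‖x - l‖ := by
      simpa using norm_add_le (gammaCurve θ ε t - x) (x - l)
    linarith
  refine (hasDerivAt_integral_of_dominated_loc_of_deriv_le
    (bound := fun t => ‖f (gammaCurve θ ε t) * gammaDeriv θ ε t‖ * ((d / 2) ^ 2)⁻¹)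
    (F' := fun l t => f (gammaCurve θ ε t) * gammaDeriv θ ε t * ((gammaCurve θ ε t - l) ^ 2)⁻¹)
    (Metric.ball_mem_nhds l (half_pos hd)) ?_ hI ?_ ?_ ?_ ?_).2.differentiableAt
  · exact Eventually.of_forall fun x => hg.aestronglyMeasurable.mul (hmi x)
  · exact hg.aestronglyMeasurable.mul (Measurable.inv (by fun_prop)).aestronglyMeasurable
  · refine ae_of_all _ fun t x hx => ?_
    rw [norm_mul, norm_inv, norm_pow]
    refine mul_le_mul_of_nonneg_left (inv_anti₀ (by positivity) ?_) (norm_nonneg _)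
    exact pow_le_pow_left₀ (by positivity) (hlow x hx t) 2
  · exact hg.norm.mul_const _
  · refine ae_of_all _ fun t x hx => ?_
    refine HasDerivAt.const_mul _ ?_
    have hne : gammaCurve θ ε t - x ≠ 0 := by
      have := hlow x hx t
      intro h0
      rw [h0, norm_zero] at this
      linarith
    have := ((hasDerivAt_id x).const_sub (gammaCurve θ ε t)).inv hne
    refine HasDerivAt.congr_deriv (f := fun x => (gammaCurve θ ε t - x)⁻¹) this ?_
    simp

lemma log_ray_lim {w l : ℂ} (hw : w ∈ Complex.slitPlane) (hw' : -w ∈ Complex.slitPlane) (m : ℂ) :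
    Tendsto (fun t : ℝ => Complex.log ((t : ℂ) * w - l) - Complex.log (m - (t : ℂ) * w)) atTop
      (𝓝 (Complex.log w - Complex.log (-w))) := by
  have h0 : Tendsto (fun t : ℝ => ((t⁻¹ : ℝ) : ℂ)) atTop (𝓝 ((0 : ℝ) : ℂ)) :=
    (Complex.continuous_ofReal.tendsto 0).comp tendsto_inv_atTop_zero
  have ha : Tendsto (fun t : ℝ => w - l * ((t⁻¹ : ℝ) : ℂ)) atTop (𝓝 w) := by
    simpa using (h0.const_mul l).const_sub w
  have hb : Tendsto (fun t : ℝ => m * ((t⁻¹ : ℝ) : ℂ) - w) atTop (𝓝 (-w)) := by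
    simpa using (h0.const_mul m).sub_const w
  refine ((ha.clog hw).sub (hb.clog hw')).congr' ?_
  filter_upwards [Ioi_mem_atTop 0, ha.eventually_ne (Complex.slitPlane_ne_zero hw),
    hb.eventually_ne (Complex.slitPlane_ne_zero hw')] with t ht h1 h2
  have ht' : (0 : ℝ) < t := ht
  have htc : (t : ℂ) ≠ 0 := by exact_mod_cast ht'.ne'
  have e1 : (t : ℂ) * w - l = (t : ℂ) * (w - l * ((t⁻¹ : ℝ) : ℂ)) := by
    push_cast; field_simp
  have e2 : m - (t : ℂ) * w = (t : ℂ) * (m * ((t⁻¹ : ℝ) : ℂ) - w) := by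
    push_cast; field_simp
  rw [e1, e2, Complex.log_ofReal_mul ht' h1, Complex.log_ofReal_mul ht' h2]
  ring

lemma exp_logs {θ : ℝ} (hθ1 : Real.pi / 2 < θ) (hθ2 : θ < Real.pi) :
    Complex.log (Complex.exp ((θ : ℂ) * Complex.I)) = θ * Complex.I ∧
    Complex.log (-Complex.exp ((θ : ℂ) * Complex.I)) = (θ - Real.pi) * Complex.I ∧
    Complex.log (Complex.exp (-(θ : ℂ) * Complex.I)) = -θ * Complex.I ∧
    Complex.log (-Complex.exp (-(θ : ℂ) * Complex.I)) = (Real.pi - θ) * Complex.I := by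
  have hp := Real.pi_pos
  refine ⟨Complex.log_exp (by simp; linarith) (by simp; linarith), ?_,
    Complex.log_exp (by simp; linarith) (by simp; linarith), ?_⟩
  · have : -Complex.exp ((θ : ℂ) * Complex.I) = Complex.exp (((θ : ℂ) - Real.pi) * Complex.I) := by
      rw [sub_mul, Complex.exp_sub, Complex.exp_pi_mul_I, div_neg, div_one]
    rw [this]
    exact Complex.log_exp (by simp; linarith) (by simp; linarith)
  · have : -Complex.exp (-(θ : ℂ) * Complex.I) = Complex.exp (((Real.pi : ℂ) - θ) * Complex.I) := by
      rw [sub_eq_add_neg, add_mul, Complex.exp_add, Complex.exp_pi_mul_I, neg_one_mul]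
    rw [this]
    exact Complex.log_exp (by simp; linarith) (by simp; linarith)

lemma left_notMem_range {θ ε : ℝ} (hθ1 : Real.pi / 2 < θ) (hθ2 : θ < Real.pi) (hε : 0 ≤ ε) {l : ℂ}
    (hl : l ∈ leftReg θ ε) : l ∉ range (gammaCurve θ ε) := by
  rintro ⟨t, rfl⟩
  have h1 := gamma_graph hθ1 hθ2 hε t
  have h2 : (gammaCurve θ ε t).re - gammaG θ ε (gammaCurve θ ε t).im < 0 := hl
  linarith

lemma kernel_int {θ ε : ℝ} (hθ1 : Real.pi / 2 < θ) (hθ2 : θ < Real.pi) (hε : 0 ≤ ε) {l : ℂ}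
    (hl : l ∉ range (gammaCurve θ ε)) {μ : ℝ} (hμ : 1 ≤ μ) :
    Integrable fun t => (gammaCurve θ ε t - l)⁻¹ * ((μ : ℂ) / ((μ : ℂ) - gammaCurve θ ε t)) *
      gammaDeriv θ ε t := by
  have hγ := gamma_cont (θ := θ) hε
  obtain ⟨d, hd, h⟩ := dist_closed (range_closed hε) hl
  have hC : 0 ≤ ((1 + ‖l‖) / d + 1) * (2 * μ) := by positivity
  refine (bound_int (((1 + ‖l‖) / d + 1) * (2 * μ))).mono' ?_ (ae_of_all _ fun t => ?_)
  · refine AEStronglyMeasurable.mul ?_ (gammaDeriv_meas θ ε).aestronglyMeasurable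
    refine Measurable.aestronglyMeasurable ?_
    exact (Measurable.inv (by fun_prop)).mul (Measurable.div (by fun_prop) (by fun_prop))
  · rw [norm_mul, mul_comm]
    refine mul_le_mul (gammaDeriv_norm hθ1 hθ2 t) ?_ (norm_nonneg _) (by norm_num)
    refine le_trans ?_ (inv_mono hC (gamma_norm (θ := θ) hε t))
    rw [norm_mul, norm_inv]
    have h1 := inv_bound hd (h _ (mem_range_self t))
    have h2 := (mu_factor hμ (gamma_re_nonpos hθ1 hθ2 hε t)).2
    set z := gammaCurve θ ε t
    calc _ ≤ ((1 + ‖l‖) / d + 1) * (1 + ‖z‖)⁻¹ * (2 * μ * (1 + ‖z‖)⁻¹) := by gcongr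
      _ = ((1 + ‖l‖) / d + 1) * (2 * μ) * ((1 + ‖z‖)⁻¹ * (1 + ‖z‖)⁻¹) := by ring
      _ ≤ _ := mul_le_mul_of_nonneg_left (two_inv (norm_nonneg z)) hC

lemma kernel_val {θ ε : ℝ} (hθ1 : Real.pi / 2 < θ) (hθ2 : θ < Real.pi) (hε : 0 ≤ ε) {l : ℂ}
    (hl : l ∈ leftReg θ ε) {μ : ℝ} (hμ : 1 ≤ μ) :
    ∫ t, (gammaCurve θ ε t - l)⁻¹ * ((μ : ℂ) / ((μ : ℂ) - gammaCurve θ ε t)) * gammaDeriv θ ε t =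
      (μ : ℂ) / ((μ : ℂ) - l) * (2 * Real.pi * Complex.I) := by
  have hγ := gamma_cont (θ := θ) hε
  have hr := left_notMem_range hθ1 hθ2 hε hl
  have hi := kernel_int hθ1 hθ2 hε hr hμ
  have hml : (μ : ℂ) - l ≠ 0 := mu_ne hμ (leftReg_re hl).le
  have hs1 : ∀ t, gammaCurve θ ε t - l ∈ Complex.slitPlane := by
    intro t
    rw [Complex.mem_slitPlane_iff]
    by_cases him : (gammaCurve θ ε t - l).im = 0
    · left
      have h1 := gamma_graph hθ1 hθ2 hε t
      have h2 : l.re - gammaG θ ε l.im < 0 := hl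
      have h3 : (gammaCurve θ ε t).im = l.im := by
        rw [Complex.sub_im] at him; linarith
      rw [h3] at h1
      rw [Complex.sub_re]; linarith
    · exact Or.inr him
  have hs2 : ∀ t, (μ : ℂ) - gammaCurve θ ε t ∈ Complex.slitPlane := by
    intro t
    rw [Complex.mem_slitPlane_iff]
    left
    have := gamma_re_nonpos hθ1 hθ2 hε t
    simp only [Complex.sub_re, Complex.ofReal_re]; linarith
  set P : ℝ → ℂ := fun t => (μ : ℂ) / ((μ : ℂ) - l) *
    (Complex.log (gammaCurve θ ε t - l) - Complex.log ((μ : ℂ) - gammaCurve θ ε t)) with hP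
  have hPc : Continuous P := by
    refine continuous_const.mul (Continuous.sub ?_ ?_)
    · exact Continuous.clog (by fun_prop) hs1
    · exact Continuous.clog (by fun_prop) hs2
  have hFTC : ∀ T : ℝ, ∫ t in (-T)..T, (gammaCurve θ ε t - l)⁻¹ *
      ((μ : ℂ) / ((μ : ℂ) - gammaCurve θ ε t)) * gammaDeriv θ ε t = P T - P (-T) := by
    intro T
    refine integral_eq_of_hasDerivAt_off_countable P _ (s := {-ε, ε})
      (Set.Finite.countable (by simp)) hPc.continuousOn ?_ hi.intervalIntegrable
    intro t ht
    have hd := gamma_deriv (θ := θ) hε t ht.2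
    have d1 := (hd.sub_const l).clog_real (hs1 t)
    have d2 := (hd.const_sub (μ : ℂ)).clog_real (hs2 t)
    refine ((d1.sub d2).const_mul ((μ : ℂ) / ((μ : ℂ) - l))).congr_deriv ?_
    have n1 := Complex.slitPlane_ne_zero (hs1 t)
    have n2 := Complex.slitPlane_ne_zero (hs2 t)
    field_simp
    ring
  obtain ⟨hsin, hcos⟩ := sin_cos_facts hθ1 hθ2
  obtain ⟨l1, l2, l3, l4⟩ := exp_logs hθ1 hθ2
  have w1 : Complex.exp ((θ : ℂ) * Complex.I) ∈ Complex.slitPlane := by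
    rw [Complex.mem_slitPlane_iff, (exp_re_im θ).2]; exact Or.inr hsin.ne'
  have w2 : -Complex.exp ((θ : ℂ) * Complex.I) ∈ Complex.slitPlane := by
    rw [Complex.mem_slitPlane_iff, Complex.neg_im, (exp_re_im θ).2]
    exact Or.inr (neg_ne_zero.2 hsin.ne')
  have w3 : Complex.exp (-(θ : ℂ) * Complex.I) ∈ Complex.slitPlane := by
    rw [Complex.mem_slitPlane_iff, (exp_neg_re_im θ).2]; exact Or.inr (neg_ne_zero.2 hsin.ne')
  have w4 : -Complex.exp (-(θ : ℂ) * Complex.I) ∈ Complex.slitPlane := by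
    rw [Complex.mem_slitPlane_iff, Complex.neg_im, (exp_neg_re_im θ).2, neg_neg]
    exact Or.inr hsin.ne'
  have t1 : Tendsto P atTop (𝓝 ((μ : ℂ) / ((μ : ℂ) - l) * (Real.pi * Complex.I))) := by
    have := (log_ray_lim (l := l) w1 w2 (μ : ℂ)).const_mul ((μ : ℂ) / ((μ : ℂ) - l))
    rw [l1, l2, show (θ : ℂ) * Complex.I - (θ - Real.pi) * Complex.I = Real.pi * Complex.I by ring]
      at this
    refine this.congr' ?_
    filter_upwards [Ioi_mem_atTop ε] with t ht
    have ht' : ε < t := ht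
    simp only [hP, gammaCurve, not_le.2 (by linarith : -ε < t), not_lt.2 ht'.le, if_false]
  have t2 : Tendsto (fun T => P (-T)) atTop
      (𝓝 ((μ : ℂ) / ((μ : ℂ) - l) * (-Real.pi * Complex.I))) := by
    have := (log_ray_lim (l := l) w3 w4 (μ : ℂ)).const_mul ((μ : ℂ) / ((μ : ℂ) - l))
    rw [l3, l4, show -(θ : ℂ) * Complex.I - (Real.pi - θ) * Complex.I = -Real.pi * Complex.I by ring]
      at this
    refine this.congr' ?_
    filter_upwards [Ioi_mem_atTop ε] with t ht
    have ht' : ε < t := ht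
    simp only [hP, gammaCurve, (by linarith : -t ≤ -ε), if_true, Complex.ofReal_neg, neg_neg]
  have hl1 := intervalIntegral_tendsto_integral hi
      tendsto_neg_atTop_atBot (tendsto_id (α := ℝ) (x := atTop))
  refine tendsto_nhds_unique hl1 ?_
  have := t1.sub t2
  simp only [id, hFTC]
  convert this using 2
  ring

lemma dslope_bound {f : ℂ → ℂ} (hf : MemHaInf f) {l : ℂ} (hl : l.re < 0) :
    ∃ C : ℝ, 0 ≤ C ∧ ∀ z : ℂ, z.re < 0 → ‖dslope f l z‖ ≤ C * (1 + ‖z‖)⁻¹ := by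
  have hopen : IsOpen {z : ℂ | z.re < 0} := isOpen_lt Complex.continuous_re continuous_const
  have hnh := hopen.mem_nhds hl
  have hd := (Complex.differentiableOn_dslope hnh).2 hf.holo
  obtain ⟨M, hM⟩ := hf.bdd
  obtain ⟨r, hr, hsub⟩ := Metric.nhds_basis_closedBall.mem_iff.1 hnh
  obtain ⟨B, hB⟩ := (isCompact_closedBall l r).exists_bound_of_continuousOn
    (hd.continuousOn.mono hsub)
  have hM0 : 0 ≤ M := (norm_nonneg _).trans (hM l hl)
  have hB0 : 0 ≤ B := (norm_nonneg _).trans (hB l (Metric.mem_closedBall_self hr.le))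
  have hK1 : 0 ≤ B * (1 + ‖l‖ + r) := by positivity
  have hK2 : 0 ≤ 2 * M * ((1 + ‖l‖) / r + 1) := by positivity
  refine ⟨B * (1 + ‖l‖ + r) + 2 * M * ((1 + ‖l‖) / r + 1), by positivity, fun z hz => ?_⟩
  have hzp : 0 < (1 + ‖z‖)⁻¹ := by positivity
  by_cases h : z ∈ Metric.closedBall l r
  · have h1 := hB z h
    rw [Metric.mem_closedBall, dist_eq_norm] at h
    have h2 : ‖z‖ ≤ ‖z - l‖ + ‖l‖ := by simpa using norm_add_le (z - l) l
    have h3 : B ≤ B * (1 + ‖l‖ + r) * (1 + ‖z‖)⁻¹ := by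
      rw [← div_eq_mul_inv, le_div_iff₀ (by positivity)]
      exact mul_le_mul_of_nonneg_left (by linarith) hB0
    nlinarith [mul_nonneg hK2 hzp.le]
  · rw [Metric.mem_closedBall, dist_eq_norm, not_le] at h
    have hne : z ≠ l := by
      rintro rfl; simp at h; linarith
    rw [dslope_of_ne _ hne, slope_def_field, norm_div]
    have h1 : ‖f z - f l‖ ≤ 2 * M := (norm_sub_le _ _).trans (by linarith [hM z hz, hM l hl])
    have h2 := inv_bound hr h.le
    have h3 : ‖f z - f l‖ / ‖z - l‖ ≤ 2 * M * (((1 + ‖l‖) / r + 1) * (1 + ‖z‖)⁻¹) := by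
      rw [div_eq_mul_inv]; gcongr
    nlinarith [mul_nonneg hK1 hzp.le]

lemma part_minus {f : ℂ → ℂ} (hf : MemHaInf f) {θ ε : ℝ}
    (hθ1 : Real.pi / 2 < θ) (hθ2 : θ < Real.pi) (hε : 0 ≤ ε) {l : ℂ} (hl : l ∈ leftReg θ ε) :
    ∫ t, f (gammaCurve θ ε t) / (gammaCurve θ ε t - l) * gammaDeriv θ ε t =
      2 * Real.pi * Complex.I * f l := by
  have hγ := gamma_cont (θ := θ) hε
  have hopen : IsOpen {z : ℂ | z.re < 0} := isOpen_lt Complex.continuous_re continuous_const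
  have hre := leftReg_re hl
  have hr := left_notMem_range hθ1 hθ2 hε hl
  obtain ⟨hu, -⟩ := part_one hf hθ1 hθ2 hε hr
  obtain ⟨C, hC, hb⟩ := dslope_bound hf hre
  have hd := (Complex.differentiableOn_dslope (hopen.mem_nhds hre)).2 hf.holo
  have hlim := mu_lim hθ1 hθ2 hε hu
  refine tendsto_nhds_unique hlim ?_
  have hlim2 := (mu_one l).mul_const (2 * Real.pi * Complex.I * f l)
  rw [one_mul] at hlim2
  refine hlim2.congr' ?_
  filter_upwards [Ici_mem_atTop 1] with μ hμ
  have h0 := boundary_zero hθ1 hθ2 hε (hd.mono fun z hz => leftReg_re hz) hC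
    (fun z hz => hb z (leftReg_re hz)) (fun t ht => (hd.differentiableAt (hopen.mem_nhds
      (gamma_re_neg hθ1 hθ2 hε ht))).continuousAt) hμ
  have hk := kernel_int hθ1 hθ2 hε hr hμ
  have hu' : Integrable fun t => f (gammaCurve θ ε t) / (gammaCurve θ ε t - l) * gammaDeriv θ ε t *
      ((μ : ℂ) / ((μ : ℂ) - gammaCurve θ ε t)) := by
    refine hu.mul_bdd (c := 1) ?_ (ae_of_all _ fun t =>
      (mu_factor hμ (gamma_re_nonpos hθ1 hθ2 hε t)).1)
    exact (Measurable.div (by fun_prop) (by fun_prop)).aestronglyMeasurable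
  have e : ∀ t, dslope f l (gammaCurve θ ε t) * ((μ : ℂ) / ((μ : ℂ) - gammaCurve θ ε t)) *
      gammaDeriv θ ε t = f (gammaCurve θ ε t) / (gammaCurve θ ε t - l) * gammaDeriv θ ε t *
      ((μ : ℂ) / ((μ : ℂ) - gammaCurve θ ε t)) - f l * ((gammaCurve θ ε t - l)⁻¹ *
      ((μ : ℂ) / ((μ : ℂ) - gammaCurve θ ε t)) * gammaDeriv θ ε t) := by
    intro t
    have hne : gammaCurve θ ε t ≠ l := fun h => hr ⟨t, h⟩
    rw [dslope_of_ne _ hne, slope_def_field]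
    ring
  simp only [e] at h0
  rw [integral_sub hu' (hk.const_mul _), integral_const_mul, kernel_val hθ1 hθ2 hε hl hμ,
    sub_eq_zero] at h0
  rw [h0]; ring

lemma part_plus {f : ℂ → ℂ} (hf : MemHaInf f) {θ ε : ℝ}
    (hθ1 : Real.pi / 2 < θ) (hθ2 : θ < Real.pi) (hε : 0 ≤ ε) {l : ℂ}
    (hl : 0 < l.re - gammaG θ ε l.im) :
    ∫ t, f (gammaCurve θ ε t) / (gammaCurve θ ε t - l) * gammaDeriv θ ε t = 0 := by
  have hopen : IsOpen {z : ℂ | z.re < 0} := isOpen_lt Complex.continuous_re continuous_const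
  have hr : l ∉ range (gammaCurve θ ε) := by
    rintro ⟨t, rfl⟩
    have h1 := gamma_graph hθ1 hθ2 hε t
    linarith
  have hcl : IsClosed {z : ℂ | z.re - gammaG θ ε z.im ≤ 0} := by
    have := gammaG_cont θ ε
    exact isClosed_le (by fun_prop) continuous_const
  obtain ⟨d, hd, hdist⟩ := dist_closed hcl (l := l) (by simpa using hl)
  obtain ⟨M, hM⟩ := hf.bdd
  have hM0 : 0 ≤ M := (norm_nonneg _).trans (hM (-1) (by simp))
  obtain ⟨hu, -⟩ := part_one hf hθ1 hθ2 hε hr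
  refine tendsto_nhds_unique (mu_lim hθ1 hθ2 hε hu) (tendsto_const_nhds.congr' ?_)
  filter_upwards [Ici_mem_atTop 1] with μ hμ
  have hne : ∀ z ∈ leftReg θ ε, z - l ≠ 0 := by
    intro z hz h0
    have := hdist z (show _ - _ ≤ (0 : ℝ) from le_of_lt hz)
    rw [h0, norm_zero] at this
    linarith
  have h0 := boundary_zero hθ1 hθ2 hε (q := fun z => f z / (z - l))
    (C := M * ((1 + ‖l‖) / d + 1)) ?_ (by positivity) ?_ ?_ hμ
  · rw [← h0]
    refine integral_congr_ae (ae_of_all _ fun t => ?_)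
    simp only
    ring
  · exact (hf.holo.mono fun z hz => leftReg_re hz).div (by fun_prop) hne
  · intro z hz
    rw [norm_div, div_eq_mul_inv, mul_assoc]
    exact mul_le_mul (hM z (leftReg_re hz)) (inv_bound hd (hdist z (show _ - _ ≤ (0 : ℝ) from le_of_lt hz)))
      (by positivity) hM0
  · intro t ht
    refine ContinuousAt.div (hf.holo.differentiableAt (hopen.mem_nhds
      (gamma_re_neg hθ1 hθ2 hε ht))).continuousAt (by fun_prop) ?_
    exact sub_ne_zero.2 fun h => hr ⟨t, h⟩

/-- for `f ∈ H_a^∞`,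
`f̃(λ) = (2πi)⁻¹ ∫_{Γ_{θ,ε}} f(z)/(z−λ) dz` is holomorphic off the contour,
equals `f` on the left region `Γ_{θ,ε}^−` and vanishes on the right region `Γ_{θ,ε}^+`. -/
theorem stmt9 (f : ℂ → ℂ) (hf : MemHaInf f) (θ ε : ℝ)
    (hθ1 : Real.pi / 2 < θ) (hθ2 : θ < Real.pi) (hε : 0 ≤ ε) :
    DifferentiableOn ℂ
      (fun lam : ℂ => (((2 * Real.pi : ℝ) : ℂ) * Complex.I)⁻¹ *
        ∫ t : ℝ, f (gammaCurve θ ε t) / (gammaCurve θ ε t - lam) * gammaDeriv θ ε t)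
      (Set.range (gammaCurve θ ε))ᶜ ∧
    (∀ lam ∈ gammaMinus θ ε,
      (((2 * Real.pi : ℝ) : ℂ) * Complex.I)⁻¹ *
        (∫ t : ℝ, f (gammaCurve θ ε t) / (gammaCurve θ ε t - lam) * gammaDeriv θ ε t)
      = f lam) ∧
    (∀ lam ∈ gammaPlus θ ε,
      (((2 * Real.pi : ℝ) : ℂ) * Complex.I)⁻¹ *
        (∫ t : ℝ, f (gammaCurve θ ε t) / (gammaCurve θ ε t - lam) * gammaDeriv θ ε t)
      = 0) := by
  have hpi : (((2 * Real.pi : ℝ) : ℂ) * Complex.I) ≠ 0 := by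
    refine mul_ne_zero ?_ Complex.I_ne_zero
    exact_mod_cast Real.two_pi_pos.ne'
  refine ⟨?_, ?_, ?_⟩
  · intro l hl
    exact ((part_one hf hθ1 hθ2 hε hl).2.const_mul _).differentiableWithinAt
  · rintro l ⟨t, x, hx, rfl⟩
    rw [part_minus hf hθ1 hθ2 hε (shift_mem hθ1 hθ2 hε t hx), inv_mul_eq_iff_eq_mul₀ hpi]
    push_cast
    ring
  · rintro l ⟨t, x, hx, rfl⟩
    rw [part_plus hf hθ1 hθ2 hε (by rw [graph_shift hθ1 hθ2 hε]; exact hx), mul_zero]
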